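/- Let K > 0 and δ > 0. Let k₁, k⁰₁ : A → ℝ and k₂, k⁰₂ : B → ℝ be bounded measurable functions with ‖k₁⊕k₂‖_∞ ≤ K, ‖k⁰₁⊕k⁰₂‖_∞ ≤ K, ‖k₁−k⁰₁‖_∞ ≤ δ and ‖k₂−k⁰₂‖_∞ ≤ δ, where (k₁⊕k₂)(z₁,z₂) = k₁(z₁)+k₂(z₂). Let f^w, ĝ^w be densities on A × B with respect to μ, and f₁, ĝ₁ and f₂, ĝ₂ be densities with respect to μ₁ and μ₂ respectively, all integrable against the relevant bounded functions. Let M̂ denote the dual criterion built from (ĝ^w, ĝ₁, ĝ₂) and M the one built from (f^w, f₁, f₂). Then |(M̂(k₁,k₂) − M(k₁,k₂)) − (M̂(k⁰₁,k⁰₂) − M(k⁰₁,k⁰₂))| ≤ 2δ·e^K·‖ĝ^w − f^w‖_{L¹(μ)} + δ·‖ĝ₁ − f₁‖_{L¹(μ₁)} + δ·‖ĝ₂ − f₂‖_{L¹(μ₂)}. -/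

import Mathlib

/-!
The double difference of criteria is linear in each difference of densities: for a bounded test
function `φ` (compared with `ψ`) and densities `p`, `q`, the corresponding contribution is
`∫ (φ - ψ) (q - p)`, which is at most `sup |φ - ψ| * ‖q - p‖_{L¹}`
(`abs_integral_double_diff_le`). For the marginal terms `|φ - ψ| ≤ δ` by hypothesis; for the joint
term `φ`, `ψ` are exponentials of numbers in `[-K, K]` differing by at most `2 δ`, and `exp` is
`e^K`-Lipschitz below `K` (`abs_exp_sub_exp_le`).
-/

open MeasureTheory Real

/-- The dual criterion
`M(k₁,k₂) = ∬ e^{k₁(z₁)+k₂(z₂)} w dμ − ∫ k₁ p dμ₁ − ∫ k₂ q dμ₂`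
built from a joint density `w` and marginal densities `p`, `q`. -/
noncomputable def dualCriterion {A B : Type*} [MeasurableSpace A] [MeasurableSpace B]
    (μ₁ : Measure A) (μ₂ : Measure B) (w : A × B → ℝ) (p : A → ℝ) (q : B → ℝ)
    (k₁ : A → ℝ) (k₂ : B → ℝ) : ℝ :=
  (∫ z : A × B, Real.exp (k₁ z.1 + k₂ z.2) * w z ∂(μ₁.prod μ₂))
    - (∫ z₁, k₁ z₁ * p z₁ ∂μ₁) - ∫ z₂, k₂ z₂ * q z₂ ∂μ₂

/-- Normalization forces integrability: the Bochner integral of a non-integrable function is `0`. -/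
theorem integrable_of_integral_eq_one_real {X : Type*} [MeasurableSpace X] {μ : Measure X}
    {r : X → ℝ} (h : ∫ x, r x ∂μ = 1) : Integrable r μ :=
  Integrable.of_integral_ne_zero (by rw [h]; exact one_ne_zero)

/-- Contribution of one density to the double difference of criteria. -/
theorem abs_integral_double_diff_le {X : Type*} [MeasurableSpace X] (μ : Measure X)
    {φ ψ p q : X → ℝ} {c C D : ℝ} (hφ : Measurable φ) (hψ : Measurable ψ)
    (hφC : ∀ x, |φ x| ≤ C) (hψD : ∀ x, |ψ x| ≤ D) (hc : ∀ x, |φ x - ψ x| ≤ c)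
    (hp : Integrable p μ) (hq : Integrable q μ) :
    |((∫ x, φ x * q x ∂μ) - ∫ x, φ x * p x ∂μ) - ((∫ x, ψ x * q x ∂μ) - ∫ x, ψ x * p x ∂μ)|
      ≤ c * ∫ x, |q x - p x| ∂μ := by
  have iφ : ∀ {r : X → ℝ}, Integrable r μ → Integrable (fun x => φ x * r x) μ := fun hr =>
    hr.bdd_mul hφ.aestronglyMeasurable (Filter.Eventually.of_forall hφC)
  have iψ : ∀ {r : X → ℝ}, Integrable r μ → Integrable (fun x => ψ x * r x) μ := fun hr =>
    hr.bdd_mul hψ.aestronglyMeasurable (Filter.Eventually.of_forall hψD)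
  have dφ : Integrable (fun x => φ x * q x - φ x * p x) μ := (iφ hq).sub (iφ hp)
  have dψ : Integrable (fun x => ψ x * q x - ψ x * p x) μ := (iψ hq).sub (iψ hp)
  rw [← integral_sub (iφ hq) (iφ hp), ← integral_sub (iψ hq) (iψ hp),
    ← integral_sub dφ dψ, ← integral_const_mul, ← Real.norm_eq_abs]
  refine norm_integral_le_of_norm_le ((hq.sub hp).abs.const_mul c)
    (Filter.Eventually.of_forall fun x => ?_)
  have e : φ x * q x - φ x * p x - (ψ x * q x - ψ x * p x) = (φ x - ψ x) * (q x - p x) := by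
    ring
  rw [Real.norm_eq_abs, e, abs_mul]
  exact mul_le_mul_of_nonneg_right (hc x) (abs_nonneg _)

theorem abs_exp_sub_exp_le {a b K : ℝ} (ha : a ≤ K) (hb : b ≤ K) :
    |Real.exp a - Real.exp b| ≤ Real.exp K * |a - b| := by
  have key : ∀ {x y : ℝ}, x ≤ K → Real.exp x - Real.exp y ≤ Real.exp K * |x - y| := by
    intro x y hx
    -- Tangent line of `exp` at `x`, evaluated at `y`.
    have h1 : Real.exp x - Real.exp y ≤ Real.exp x * (x - y) := by
      have h := mul_le_mul_of_nonneg_left (Real.add_one_le_exp (y - x)) (Real.exp_pos x).le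
      rw [← Real.exp_add, add_sub_cancel] at h
      linarith
    calc Real.exp x - Real.exp y ≤ Real.exp x * (x - y) := h1
      _ ≤ Real.exp x * |x - y| := mul_le_mul_of_nonneg_left (le_abs_self _) (Real.exp_pos x).le
      _ ≤ Real.exp K * |x - y| :=
        mul_le_mul_of_nonneg_right (Real.exp_le_exp.2 hx) (abs_nonneg _)
  rw [abs_le]
  have h2 := key (y := a) hb
  rw [abs_sub_comm] at h2
  exact ⟨by linarith, key ha⟩

/-- A stochastic-equicontinuity bound for the difference of dual
criteria: if `‖k₁⊕k₂‖_∞ ≤ K`, `‖k⁰₁⊕k⁰₂‖_∞ ≤ K`, `‖k₁−k⁰₁‖_∞ ≤ δ`, `‖k₂−k⁰₂‖_∞ ≤ δ`,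
then `|(M̂(k₁,k₂) − M(k₁,k₂)) − (M̂(k⁰₁,k⁰₂) − M(k⁰₁,k⁰₂))|
  ≤ 2δ·e^K·‖ĝ^w − f^w‖_{L¹(μ)} + δ·‖ĝ₁ − f₁‖_{L¹(μ₁)} + δ·‖ĝ₂ − f₂‖_{L¹(μ₂)}`. -/
theorem dual_criterion_difference_bound
    {A B : Type*} [MeasurableSpace A] [MeasurableSpace B]
    (μ₁ : Measure A) (μ₂ : Measure B) [SigmaFinite μ₁] [SigmaFinite μ₂]
    (K δ : ℝ) (hK : 0 < K) (hδ : 0 < δ)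
    (k₁ k01 : A → ℝ) (k₂ k02 : B → ℝ)
    (hk₁_meas : Measurable k₁) (hk₂_meas : Measurable k₂)
    (hk01_meas : Measurable k01) (hk02_meas : Measurable k02)
    (hk₁_bdd : ∃ C, ∀ z₁, |k₁ z₁| ≤ C) (hk₂_bdd : ∃ C, ∀ z₂, |k₂ z₂| ≤ C)
    (hk01_bdd : ∃ C, ∀ z₁, |k01 z₁| ≤ C) (hk02_bdd : ∃ C, ∀ z₂, |k02 z₂| ≤ C)
    (hsumK : ∀ z₁ z₂, |k₁ z₁ + k₂ z₂| ≤ K)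
    (hsumK0 : ∀ z₁ z₂, |k01 z₁ + k02 z₂| ≤ K)
    (hdiff₁ : ∀ z₁, |k₁ z₁ - k01 z₁| ≤ δ)
    (hdiff₂ : ∀ z₂, |k₂ z₂ - k02 z₂| ≤ δ)
    (fw gw : A × B → ℝ) (f₁ g₁ : A → ℝ) (f₂ g₂ : B → ℝ)
    (hfw_meas : Measurable fw) (hfw_nonneg : ∀ z, 0 ≤ fw z)
    (hfw_one : ∫ z, fw z ∂(μ₁.prod μ₂) = 1)
    (hgw_meas : Measurable gw) (hgw_nonneg : ∀ z, 0 ≤ gw z)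
    (hgw_one : ∫ z, gw z ∂(μ₁.prod μ₂) = 1)
    (hf₁_meas : Measurable f₁) (hf₁_nonneg : ∀ z₁, 0 ≤ f₁ z₁)
    (hf₁_one : ∫ z₁, f₁ z₁ ∂μ₁ = 1)
    (hg₁_meas : Measurable g₁) (hg₁_nonneg : ∀ z₁, 0 ≤ g₁ z₁)
    (hg₁_one : ∫ z₁, g₁ z₁ ∂μ₁ = 1)
    (hf₂_meas : Measurable f₂) (hf₂_nonneg : ∀ z₂, 0 ≤ f₂ z₂)
    (hf₂_one : ∫ z₂, f₂ z₂ ∂μ₂ = 1)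
    (hg₂_meas : Measurable g₂) (hg₂_nonneg : ∀ z₂, 0 ≤ g₂ z₂)
    (hg₂_one : ∫ z₂, g₂ z₂ ∂μ₂ = 1) :
    |(dualCriterion μ₁ μ₂ gw g₁ g₂ k₁ k₂ - dualCriterion μ₁ μ₂ fw f₁ f₂ k₁ k₂)
        - (dualCriterion μ₁ μ₂ gw g₁ g₂ k01 k02 - dualCriterion μ₁ μ₂ fw f₁ f₂ k01 k02)|
      ≤ 2 * δ * exp K * (∫ z, |gw z - fw z| ∂(μ₁.prod μ₂))
        + δ * (∫ z₁, |g₁ z₁ - f₁ z₁| ∂μ₁)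
        + δ * ∫ z₂, |g₂ z₂ - f₂ z₂| ∂μ₂ := by
  obtain ⟨C₁, hC₁⟩ := hk₁_bdd
  obtain ⟨C₂, hC₂⟩ := hk₂_bdd
  obtain ⟨D₁, hD₁⟩ := hk01_bdd
  obtain ⟨D₂, hD₂⟩ := hk02_bdd
  have h₁ := abs_integral_double_diff_le μ₁ hk₁_meas hk01_meas hC₁ hD₁ hdiff₁
    (integrable_of_integral_eq_one_real hf₁_one) (integrable_of_integral_eq_one_real hg₁_one)
  have h₂ := abs_integral_double_diff_le μ₂ hk₂_meas hk02_meas hC₂ hD₂ hdiff₂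
    (integrable_of_integral_eq_one_real hf₂_one) (integrable_of_integral_eq_one_real hg₂_one)
  have hw := abs_integral_double_diff_le (μ₁.prod μ₂)
    (φ := fun z : A × B => Real.exp (k₁ z.1 + k₂ z.2))
    (ψ := fun z : A × B => Real.exp (k01 z.1 + k02 z.2))
    (c := 2 * δ * Real.exp K) (C := Real.exp K) (D := Real.exp K)
    (by fun_prop) (by fun_prop)
    (fun z => by
      rw [Real.abs_exp]; exact Real.exp_le_exp.2 (abs_le.1 (hsumK z.1 z.2)).2)
    (fun z => by
      rw [Real.abs_exp]; exact Real.exp_le_exp.2 (abs_le.1 (hsumK0 z.1 z.2)).2)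
    (fun z => by
      refine (abs_exp_sub_exp_le (abs_le.1 (hsumK z.1 z.2)).2
        (abs_le.1 (hsumK0 z.1 z.2)).2).trans ?_
      rw [mul_comm]
      refine mul_le_mul_of_nonneg_right ?_ (Real.exp_pos K).le
      have a := abs_le.1 (hdiff₁ z.1)
      have b := abs_le.1 (hdiff₂ z.2)
      exact abs_le.2 ⟨by linarith, by linarith⟩)
    (integrable_of_integral_eq_one_real hfw_one) (integrable_of_integral_eq_one_real hgw_one)
  unfold dualCriterion
  rw [abs_le] at h₁ h₂ hw ⊢
  constructor <;> linarith [h₁.1, h₁.2, h₂.1, h₂.2, hw.1, hw.2]
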